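/- Suppose Assumptions 1 and 2 hold, and let ε > 0 be such that εI_N ≺ R (Loewner order). Then there exists n_ε ≥ 1 such that for every n ≥ n_ε with ∇F_n(h_n) ≠ 0, one has ∇²F_n(h_n) ⪰ R − εI_N and F_n(h_{n+1}) − inf F_n ≤ θ_n (F_n(h_n) − inf F_n), where θ_n = 1 − (1 + ε)^{−1} θ̃_n and θ̃_n = (∇F_n(h_n)ᵀ C_n(h_n) ∇F_n(h_n)) / (∇F_n(h_n)ᵀ (∇²F_n(h_n))⁻¹ ∇F_n(h_n)), with C_n(h_n) = D_n (D_nᵀ A_n(h_n) D_n)† D_nᵀ and (·)† the Moore–Penrose pseudo-inverse. -/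

import Mathlib

open Matrix Filter Topology

noncomputable section

/-- Identification of `EuclideanSpace ℝ (Fin N)` with plain tuples `Fin N → ℝ`. -/
def toEuc {N : ℕ} (v : Fin N → ℝ) : EuclideanSpace ℝ (Fin N) :=
  (WithLp.equiv 2 (Fin N → ℝ)).symm v

def ofEuc {N : ℕ} (v : EuclideanSpace ℝ (Fin N)) : Fin N → ℝ :=
  WithLp.equiv 2 (Fin N → ℝ) v

/-- The quadratic form `vᵀ M v`. -/
def qf {N : ℕ} (M : Matrix (Fin N) (Fin N) ℝ)
    (v : EuclideanSpace ℝ (Fin N)) : ℝ :=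
  ofEuc v ⬝ᵥ M.mulVec (ofEuc v)

/-- Matrix-vector product `M v`, viewed in `EuclideanSpace`. -/
def mulE {N : ℕ} (M : Matrix (Fin N) (Fin N) ℝ)
    (v : EuclideanSpace ℝ (Fin N)) : EuclideanSpace ℝ (Fin N) :=
  toEuc (M.mulVec (ofEuc v))

/-- The range of the matrix `D`, i.e. `{D u : u ∈ ℝ^M}`, as a subset of `EuclideanSpace`. -/
def rangeD {N M : ℕ} (D : Matrix (Fin N) (Fin M) ℝ) : Set (EuclideanSpace ℝ (Fin N)) :=
  {x | ∃ u : Fin M → ℝ, x = toEuc (D.mulVec u)}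

open scoped Classical in
/-- The Moore–Penrose pseudo-inverse of a real matrix, defined via its characterizing
(Penrose) equations; it exists and is unique for every real matrix. -/
def pinv {m n : ℕ} (A : Matrix (Fin m) (Fin n) ℝ) : Matrix (Fin n) (Fin m) ℝ :=
  if h : ∃ B : Matrix (Fin n) (Fin m) ℝ,
      A * B * A = A ∧ B * A * B = B ∧ (A * B)ᵀ = A * B ∧ (B * A)ᵀ = B * A
  then h.choose else 0

end


section Abstract

theorem aux_taylor {φ φ' φ'' : ℝ → ℝ} {c : ℝ} (h1 : ∀ t, HasDerivAt φ (φ' t) t)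
    (h2 : ∀ t, HasDerivAt φ' (φ'' t) t) (hc : ∀ t ∈ Set.Icc (0:ℝ) 1, c ≤ φ'' t) :
    φ 0 + φ' 0 + c / 2 ≤ φ 1 := by
  have hm1 : MonotoneOn (fun t => φ' t - c * t) (Set.Icc (0:ℝ) 1) := by
    have hd : ∀ t, HasDerivAt (fun t => φ' t - c * t) (φ'' t - c * 1) t := fun t =>
      (h2 t).sub ((hasDerivAt_id t).const_mul c)
    apply monotoneOn_of_deriv_nonneg (convex_Icc 0 1)
    · exact fun t _ => (hd t).continuousAt.continuousWithinAt
    · exact fun t _ => (hd t).differentiableAt.differentiableWithinAt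
    · intro t ht
      rw [(hd t).deriv]
      have := hc t (interior_subset ht)
      linarith
  have hm2 : MonotoneOn (fun t => φ t - φ' 0 * t - c / 2 * t ^ 2) (Set.Icc (0:ℝ) 1) := by
    have hd : ∀ t, HasDerivAt (fun t => φ t - φ' 0 * t - c / 2 * t ^ 2)
        (φ' t - φ' 0 * 1 - c / 2 * (2 * t)) t := fun t => by
      have := ((h1 t).sub ((hasDerivAt_id t).const_mul (φ' 0))).sub
        ((hasDerivAt_pow 2 t).const_mul (c / 2))
      exact this.congr_deriv (by simp)
    apply monotoneOn_of_deriv_nonneg (convex_Icc 0 1)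
    · exact fun t _ => (hd t).continuousAt.continuousWithinAt
    · exact fun t _ => (hd t).differentiableAt.differentiableWithinAt
    · intro t ht
      rw [(hd t).deriv]
      have ht' := interior_subset ht
      have := hm1 (show (0:ℝ) ∈ Set.Icc (0:ℝ) 1 by simp) ht' ht'.1
      simp only at this
      linarith
  have := hm2 (show (0:ℝ) ∈ Set.Icc (0:ℝ) 1 by simp) (show (1:ℝ) ∈ Set.Icc (0:ℝ) 1 by simp)
    zero_le_one
  simp only at this
  linarith

theorem aux_seq {a b e : ℕ → ℝ} {m : ℝ} (hb : ∀ n, 0 ≤ b n) (he : Summable e) (he0 : ∀ n, 0 ≤ e n)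
    (hm : ∀ᶠ n in atTop, m ≤ a n) (hab : ∀ᶠ n in atTop, a (n+1) ≤ a n - b n + e n) :
    Tendsto b atTop (𝓝 0) := by
  obtain ⟨k, hk⟩ := eventually_atTop.1 (hm.and hab)
  have hsum : ∀ j, ∑ i ∈ Finset.range j, b (i + k) ≤
      a k - a (j + k) + ∑ i ∈ Finset.range j, e (i + k) := by
    intro j
    induction j with
    | zero => simp
    | succ j ih =>
      rw [Finset.sum_range_succ, Finset.sum_range_succ]
      have := (hk (j + k) (by omega)).2
      rw [show j + 1 + k = j + k + 1 by ring]
      linarith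
  have he' : Summable (fun i => e (i + k)) := (summable_nat_add_iff k).2 he
  have : Summable (fun i => b (i + k)) := by
    apply summable_of_sum_range_le (c := a k - m + ∑' i, e (i + k)) (fun n => hb _)
    intro j
    have h1 := (hk (j + k) (by omega)).1
    have h2 := he'.sum_le_tsum (Finset.range j) (fun i _ => he0 _)
    linarith [hsum j]
  exact ((summable_nat_add_iff k).1 this).tendsto_atTop_zero

variable {E : Type*} [NormedAddCommGroup E] [InnerProductSpace ℝ E] [CompleteSpace E]

open scoped InnerProductSpace

theorem aux_line1 {Ψ : E → ℝ} {g : E → E} (hg : ∀ x, HasGradientAt Ψ (g x) x) (x v : E) (t : ℝ) :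
    HasDerivAt (fun t : ℝ => Ψ (x + t • v)) ⟪g (x + t • v), v⟫_ℝ t := by
  have h1 : HasDerivAt (fun t : ℝ => x + t • v) v t := by
    simpa using ((hasDerivAt_id t).smul_const v).const_add x
  have h2 := (hg (x + t • v)).hasFDerivAt
  have := h2.comp_hasDerivAt t h1
  exact this.congr_deriv (by simp)

theorem aux_line2 {g : E → E} {H : E → E →L[ℝ] E} (hH : ∀ x, HasFDerivAt g (H x) x) (x v : E)
    (t : ℝ) : HasDerivAt (fun t : ℝ => ⟪g (x + t • v), v⟫_ℝ) ⟪H (x + t • v) v, v⟫_ℝ t := by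
  have h1 : HasDerivAt (fun t : ℝ => x + t • v) v t := by
    simpa using ((hasDerivAt_id t).smul_const v).const_add x
  have := (hH (x + t • v)).comp_hasDerivAt t h1
  simpa using this.inner ℝ (hasDerivAt_const t v)

theorem aux_taylorE {Ψ : E → ℝ} {g : E → E} {H : E → E →L[ℝ] E}
    (hg : ∀ x, HasGradientAt Ψ (g x) x) (hH : ∀ x, HasFDerivAt g (H x) x) (x v : E) (c : ℝ)
    (hc : ∀ t ∈ Set.Icc (0:ℝ) 1, c ≤ ⟪H (x + t • v) v, v⟫_ℝ) :
    Ψ x + ⟪g x, v⟫_ℝ + c / 2 ≤ Ψ (x + v) := by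
  have := aux_taylor (aux_line1 hg x v) (aux_line2 hH x v) hc
  simpa using this

theorem aux_hess_nonneg {Ψ : E → ℝ} {g : E → E} {H : E → E →L[ℝ] E}
    (hg : ∀ x, HasGradientAt Ψ (g x) x) (hH : ∀ x, HasFDerivAt g (H x) x)
    (hconv : ConvexOn ℝ Set.univ Ψ) (x v : E) : 0 ≤ ⟪H x v, v⟫_ℝ := by
  have hc : ConvexOn ℝ Set.univ (fun t : ℝ => Ψ (x + t • v)) := by
    refine ⟨convex_univ, fun s _ t _ a b ha hb hab => ?_⟩
    have := hconv.2 (Set.mem_univ (x + s • v)) (Set.mem_univ (x + t • v)) ha hb hab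
    have he : x + (a • s + b • t) • v = a • (x + s • v) + b • (x + t • v) := by
      have : x = (a + b) • x := by rw [hab, one_smul]
      conv_lhs => rw [this]
      simp only [smul_eq_mul]
      module
    simp only [he]
    exact this
  have hmono : Monotone (fun t : ℝ => ⟪g (x + t • v), v⟫_ℝ) := by
    have h1 := hc.monotoneOn_deriv (fun t _ => (aux_line1 hg x v t).differentiableAt)
    intro s t hst
    have := h1 (Set.mem_univ s) (Set.mem_univ t) hst
    rwa [(aux_line1 hg x v s).deriv, (aux_line1 hg x v t).deriv] at this
  have := (hmono.monotoneOn Set.univ).derivWithin_nonneg (x := 0)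
  rw [derivWithin_univ, (aux_line2 hH x v 0).deriv] at this
  simpa using this

theorem aux_hess_unif [FiniteDimensional ℝ E] {Ψ : E → ℝ} {g : E → E} {H : E → E →L[ℝ] E}
    (hC2 : ContDiff ℝ 2 Ψ)
    (hg : ∀ x, HasGradientAt Ψ (g x) x) (hH : ∀ x, HasFDerivAt g (H x) x)
    (C η : ℝ) (hη : 0 < η) : ∃ δ > 0, ∀ x y : E, ‖x‖ ≤ C → ‖y‖ ≤ C → ‖x - y‖ ≤ δ →
      ∀ v, ⟪H x v, v⟫_ℝ ≤ ⟪H y v, v⟫_ℝ + η * ‖v‖ ^ 2 := by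
  have hf : ContDiff ℝ 1 (fderiv ℝ Ψ) := hC2.fderiv_right (by norm_num)
  have hff : Continuous (fderiv ℝ (fderiv ℝ Ψ)) := hf.continuous_fderiv (by norm_num)
  have key : ∀ x v, fderiv ℝ (fderiv ℝ Ψ) x v v = ⟪H x v, v⟫_ℝ := by
    intro x v
    have h1 : HasFDerivAt (fderiv ℝ Ψ) (fderiv ℝ (fderiv ℝ Ψ) x) x :=
      ((hf.differentiable (by norm_num)) x).hasFDerivAt
    have h2 := h1.clm_apply (hasFDerivAt_const v x)
    have h3 := (hH x).inner ℝ (hasFDerivAt_const v x)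
    have h4 : (fun y => ⟪g y, v⟫_ℝ) = fun y => fderiv ℝ Ψ y v := by
      funext y
      rw [(hg y).hasFDerivAt.fderiv]
      simp
    rw [h4] at h3
    have := congrArg (fun L : E →L[ℝ] ℝ => L v) (h2.unique h3)
    simpa using this
  have hcpt : IsCompact (Metric.closedBall (0:E) C) := isCompact_closedBall 0 C
  have hu := hcpt.uniformContinuousOn_of_continuous hff.continuousOn
  have hu := (Metric.uniformContinuousOn_iff_le (α := E) (β := E →L[ℝ] E →L[ℝ] ℝ)).1 hu
  obtain ⟨δ, hδ, hu⟩ := hu η hη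
  refine ⟨δ, hδ, fun x y hx hy hxy v => ?_⟩
  have := hu x (by simpa using hx) y (by simpa using hy) (by rwa [dist_eq_norm])
  have this : ‖fderiv ℝ (fderiv ℝ Ψ) x - fderiv ℝ (fderiv ℝ Ψ) y‖ ≤ η := by
    rw [← dist_eq_norm (fderiv ℝ (fderiv ℝ Ψ) x)]
    exact this
  rw [← key, ← key]
  have h5 : fderiv ℝ (fderiv ℝ Ψ) x v v - fderiv ℝ (fderiv ℝ Ψ) y v v ≤ η * ‖v‖ * ‖v‖ := by
    have e : fderiv ℝ (fderiv ℝ Ψ) x v v - fderiv ℝ (fderiv ℝ Ψ) y v v =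
      (fderiv ℝ (fderiv ℝ Ψ) x - fderiv ℝ (fderiv ℝ Ψ) y) v v := by simp
    rw [e]
    calc _ ≤ ‖(fderiv ℝ (fderiv ℝ Ψ) x - fderiv ℝ (fderiv ℝ Ψ) y) v v‖ := Real.le_norm_self _
      _ ≤ ‖(fderiv ℝ (fderiv ℝ Ψ) x - fderiv ℝ (fderiv ℝ Ψ) y)‖ * ‖v‖ * ‖v‖ :=
        ContinuousLinearMap.le_opNorm₂ _ _ _
      _ ≤ _ := by gcongr
  nlinarith


theorem aux_ev_T {T : ℕ → E →L[ℝ] E} {T0 : E →L[ℝ] E} (hT : Tendsto T atTop (𝓝 T0))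
    {η : ℝ} (hη : 0 < η) :
    ∀ᶠ n in atTop, ∀ v, |⟪T n v, v⟫_ℝ - ⟪T0 v, v⟫_ℝ| ≤ η * ‖v‖ ^ 2 := by
  have h1 : Tendsto (fun n => ‖T n - T0‖) atTop (𝓝 0) := tendsto_iff_norm_sub_tendsto_zero.1 hT
  filter_upwards [h1.eventually (eventually_le_nhds hη)] with n hn v
  have e : ⟪T n v, v⟫_ℝ - ⟪T0 v, v⟫_ℝ = ⟪(T n - T0) v, v⟫_ℝ := by simp [inner_sub_left]
  rw [e]
  calc _ ≤ ‖(T n - T0) v‖ * ‖v‖ := abs_real_inner_le_norm _ _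
    _ ≤ ‖T n - T0‖ * ‖v‖ * ‖v‖ := by gcongr; exact ContinuousLinearMap.le_opNorm _ _
    _ ≤ η * ‖v‖ * ‖v‖ := by gcongr
    _ = _ := by ring

theorem aux_coer {T : E →L[ℝ] E} {μ ρ : ℝ} (hT : ∀ v, μ * ‖v‖ ^ 2 ≤ ⟪T v, v⟫_ℝ)
    (r x : E) (hr : ‖r‖ ≤ ρ) :
    μ / 2 * ‖x‖ ^ 2 - ρ * ‖x‖ ≤ 1 / 2 * ⟪T x, x⟫_ℝ - ⟪r, x⟫_ℝ := by
  have h1 := hT x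
  have h2 : ⟪r, x⟫_ℝ ≤ ρ * ‖x‖ := (real_inner_le_norm r x).trans (by gcongr)
  linarith

theorem aux_bd {μ ρ c X : ℝ} (hμ : 0 < μ) (hρ : 0 ≤ ρ) 
    (h : μ / 2 * X ^ 2 - ρ * X ≤ c) : X ≤ (2 * ρ + 2 * |c|) / μ + 1 := by
  by_contra! hX
  have h0 : 0 ≤ (2 * ρ + 2 * |c|) / μ := by positivity
  have h1 : (2 * ρ + 2 * |c|) / μ < X := by linarith
  rw [div_lt_iff₀ hμ] at h1
  have hX1 : 1 < X := by linarith
  have := le_abs_self c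
  have := abs_nonneg c
  nlinarith

theorem aux_gto0 {T : ℕ → E →L[ℝ] E} {T0 : E →L[ℝ] E} {r : ℕ → E} {r0 : E} {Ψ : E → ℝ}
    {gΨ : E → E} {B : E → E →L[ℝ] E} {h : ℕ → E} {ε m K : ℝ}
    (hT : Tendsto T atTop (𝓝 T0)) (hr : Tendsto r atTop (𝓝 r0))
    (hTs : Summable fun n => ‖T n - T (n+1)‖) (hrs : Summable fun n => ‖r n - r (n+1)‖)
    (hε : 0 < ε) (hT0 : ∀ v, ε * ‖v‖ ^ 2 ≤ ⟪T0 v, v⟫_ℝ)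
    (hTsym : ∀ n u v, ⟪T n u, v⟫_ℝ = ⟪u, T n v⟫_ℝ)
    (hBsym : ∀ x u v, ⟪B x u, v⟫_ℝ = ⟪u, B x v⟫_ℝ)
    (hm : ∀ x, m ≤ Ψ x) (hK : ∀ x v, ⟪B x v, v⟫_ℝ ≤ K * ‖v‖ ^ 2)
    (hB0 : ∀ x v, 0 ≤ ⟪B x v, v⟫_ℝ)
    {Fn : ℕ → E → ℝ} (hFn : ∀ n x, Fn n x = 1 / 2 * ⟪T n x, x⟫_ℝ - ⟪r n, x⟫_ℝ + Ψ x)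
    {g : ℕ → E} (hg : ∀ n, g n = T n (h n) - r n + gΨ (h n))
    (hdesc : ∀ n (t : ℝ), Fn n (h (n+1)) ≤ Fn n (h n) - t * ‖g n‖ ^ 2 +
      t ^ 2 / 2 * ⟪(T n + B (h n)) (g n), g n⟫_ℝ)
    (hzero : ∀ n, ⟪g n, h (n+1) - h n⟫_ℝ +
        1 / 2 * ⟪(T n + B (h n)) (h (n+1) - h n), h (n+1) - h n⟫_ℝ ≤
      ⟪g n, 0 - h n⟫_ℝ + 1 / 2 * ⟪(T n + B (h n)) (0 - h n), 0 - h n⟫_ℝ)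
    (hiii : (∀ n, r n = r0 ∧ T n = T0) ∨ ∃ c : ℝ, ∀ x, ‖B x x - gΨ x‖ ≤ c) :
    (∃ C, ∀ᶠ n in atTop, ‖h n‖ ≤ C) ∧ Tendsto g atTop (𝓝 0) := by
  have hev : ∀ᶠ n in atTop, ∀ v, ε / 2 * ‖v‖ ^ 2 ≤ ⟪T n v, v⟫_ℝ := by
    filter_upwards [aux_ev_T hT (half_pos hε)] with n hn v
    have := abs_le.1 (hn v)
    linarith [hT0 v]
  obtain ⟨ρ, hρ⟩ : ∃ ρ, ∀ n, ‖r n‖ ≤ ρ := by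
    obtain ⟨ρ, hρ⟩ := hr.norm.bddAbove_range
    exact ⟨ρ, fun n => hρ ⟨n, rfl⟩⟩
  obtain ⟨τ, hτ⟩ : ∃ τ, ∀ n, ‖T n‖ ≤ τ := by
    obtain ⟨ρ, hρ⟩ := hT.norm.bddAbove_range
    exact ⟨ρ, fun n => hρ ⟨n, rfl⟩⟩
  have hρ0 : 0 ≤ ρ := (norm_nonneg _).trans (hρ 0)
  have hτ0 : 0 ≤ τ := (norm_nonneg _).trans (hτ 0)
  have hbd : ∃ C, ∀ᶠ n in atTop, ‖h n‖ ≤ C := by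
    rcases hiii with ha | ⟨c, hc⟩
    · have hF : ∀ n, Fn n = Fn 0 := by
        intro n
        funext x
        rw [hFn, hFn, (ha n).1, (ha n).2, (ha 0).1, (ha 0).2]
      have hdec : ∀ n, Fn 0 (h n) ≤ Fn 0 (h 0) := by
        intro n
        induction n with
        | zero => exact le_rfl
        | succ n ih =>
          have := hdesc n 0
          rw [hF n] at this
          simp only [zero_mul, sub_zero, ne_eq, OfNat.ofNat_ne_zero, not_false_eq_true, zero_pow,
            zero_div, add_zero] at this
          linarith
      refine ⟨_, Eventually.of_forall fun n => aux_bd hε hρ0 (c := Fn 0 (h 0) - m) ?_⟩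
      have h1 := aux_coer hT0 r0 (h n) ((ha 0).1 ▸ hρ 0)
      have h2 := hdec n
      rw [hFn 0 (h n), (ha 0).1, (ha 0).2] at h2
      linarith [hm (h n)]
    · have hc0 : 0 ≤ c := (norm_nonneg _).trans (hc 0)
      refine ⟨(2 * (ρ + c) + 2 * |0|) / (ε / 2) + 1, ?_⟩
      suffices ∀ᶠ n in atTop, ‖h (n+1)‖ ≤ (2 * (ρ + c) + 2 * |0|) / (ε / 2) + 1 by
        obtain ⟨k, hk⟩ := eventually_atTop.1 this
        refine eventually_atTop.2 ⟨k + 1, fun n hn => ?_⟩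
        have := hk (n - 1) (by omega)
        rwa [show n - 1 + 1 = n by omega] at this
      filter_upwards [hev] with n hn
      apply aux_bd (half_pos hε) (by positivity)
      set x := h (n+1)
      set y := h n
      have hA : ∀ v, ε / 2 * ‖v‖ ^ 2 ≤ ⟪(T n + B y) v, v⟫_ℝ := by
        intro v
        have := hn v
        have := hB0 y v
        simp only [_root_.add_apply, inner_add_left]
        linarith
      have h1 := aux_coer hA (r n + (B y y - gΨ y)) x
        ((norm_add_le _ _).trans (add_le_add (hρ n) (hc y)))
      refine h1.trans ?_
      have h2 := hzero n
      rw [hg n] at h2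
      change ⟪T n y - r n + gΨ y, x - y⟫_ℝ + 1 / 2 * ⟪(T n + B y) (x - y), x - y⟫_ℝ ≤
        ⟪T n y - r n + gΨ y, 0 - y⟫_ℝ + 1 / 2 * ⟪(T n + B y) (0 - y), 0 - y⟫_ℝ at h2
      have e1 : ⟪T n x, y⟫_ℝ = ⟪T n y, x⟫_ℝ := by rw [hTsym, real_inner_comm]
      have e2 : ⟪B y x, y⟫_ℝ = ⟪B y y, x⟫_ℝ := by rw [hBsym, real_inner_comm]
      simp only [_root_.add_apply, map_sub, map_zero, inner_add_left, inner_sub_left,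
        inner_sub_right, inner_zero_left, inner_zero_right, e1, e2] at h2 ⊢
      linarith
  refine ⟨hbd, ?_⟩
  obtain ⟨C, hC⟩ := hbd
  have hC0 : 0 ≤ C := by
    obtain ⟨n, hn⟩ := hC.exists
    exact (norm_nonneg _).trans hn
  set L := τ + |K| + 1 with hL
  have hLpos : 0 < L := by positivity
  have hA : ∀ n v, ⟪(T n + B (h n)) v, v⟫_ℝ ≤ L * ‖v‖ ^ 2 := by
    intro n v
    have h1 : ⟪T n v, v⟫_ℝ ≤ τ * ‖v‖ * ‖v‖ := by
      refine (real_inner_le_norm _ _).trans ?_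
      gcongr
      exact (ContinuousLinearMap.le_opNorm _ _).trans (by gcongr; exact hτ n)
    have h2 := hK (h n) v
    have h3 : K * ‖v‖ ^ 2 ≤ |K| * ‖v‖ ^ 2 := by gcongr; exact le_abs_self K
    simp only [_root_.add_apply, inner_add_left]
    rw [hL]
    nlinarith [sq_nonneg ‖v‖]
  have hdesc' : ∀ n, Fn n (h (n+1)) ≤ Fn n (h n) - ‖g n‖ ^ 2 / (2 * L) := by
    intro n
    have h1 := hdesc n (1 / L)
    have h2 : (1 / L) ^ 2 / 2 * ⟪(T n + B (h n)) (g n), g n⟫_ℝ ≤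
      (1 / L) ^ 2 / 2 * (L * ‖g n‖ ^ 2) := by gcongr; exact hA n _
    have h3 : - (1 / L) * ‖g n‖ ^ 2 + (1 / L) ^ 2 / 2 * (L * ‖g n‖ ^ 2) =
      - (‖g n‖ ^ 2 / (2 * L)) := by field_simp; ring
    linarith
  have hb : Tendsto (fun n => ‖g n‖ ^ 2 / (2 * L)) atTop (𝓝 0) := by
    apply aux_seq (a := fun n => Fn n (h n))
      (e := fun n => C ^ 2 * ‖T n - T (n+1)‖ + C * ‖r n - r (n+1)‖)
      (m := - ρ ^ 2 / ε + m)
    · intro n; positivity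
    · exact (hTs.mul_left _).add (hrs.mul_left _)
    · intro n; positivity
    · filter_upwards [hev] with n hn
      have := aux_coer hn (r n) (h n) (hρ n)
      rw [hFn]
      have h2 : - ρ ^ 2 / ε ≤ ε / 2 / 2 * ‖h n‖ ^ 2 - ρ * ‖h n‖ := by
        rw [div_le_iff₀ hε]
        nlinarith [sq_nonneg (ε / 2 * ‖h n‖ - ρ)]
      linarith [hm (h n)]
    · obtain ⟨k, hk⟩ := eventually_atTop.1 hC
      filter_upwards [eventually_ge_atTop k] with n hn
      have hx := hk (n+1) (by omega)
      have h1 := hdesc' n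
      set x := h (n+1)
      have e : Fn (n+1) x = Fn n x - 1 / 2 * ⟪(T n - T (n+1)) x, x⟫_ℝ + ⟪r n - r (n+1), x⟫_ℝ := by
        rw [hFn, hFn]
        simp only [_root_.sub_apply, inner_sub_left]
        ring
      have h2 : - ⟪(T n - T (n+1)) x, x⟫_ℝ ≤ C ^ 2 * ‖T n - T (n+1)‖ := by
        calc - ⟪(T n - T (n+1)) x, x⟫_ℝ ≤ |⟪(T n - T (n+1)) x, x⟫_ℝ| := neg_le_abs _
          _ ≤ ‖(T n - T (n+1)) x‖ * ‖x‖ := abs_real_inner_le_norm _ _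
          _ ≤ ‖T n - T (n+1)‖ * ‖x‖ * ‖x‖ := by gcongr; exact ContinuousLinearMap.le_opNorm _ _
          _ ≤ ‖T n - T (n+1)‖ * C * C := by gcongr
          _ = _ := by ring
      have h3 : ⟪r n - r (n+1), x⟫_ℝ ≤ C * ‖r n - r (n+1)‖ := by
        calc _ ≤ ‖r n - r (n+1)‖ * ‖x‖ := real_inner_le_norm _ _
          _ ≤ ‖r n - r (n+1)‖ * C := by gcongr
          _ = _ := by ring
      have h4 : 0 ≤ C ^ 2 * ‖T n - T (n+1)‖ := by positivity
      linarith
  have hb2 : Tendsto (fun n => ‖g n‖ ^ 2) atTop (𝓝 0) := by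
    have := hb.mul_const (2 * L)
    simpa [hLpos.ne', div_mul_cancel₀] using this
  rw [tendsto_zero_iff_norm_tendsto_zero]
  have := hb2.sqrt
  simpa using this

theorem aux_final [FiniteDimensional ℝ E] {T : ℕ → E →L[ℝ] E} {T0 : E →L[ℝ] E} {r : ℕ → E}
    {Ψ : E → ℝ} {gΨ : E → E} {H : E → E →L[ℝ] E} {h : ℕ → E} {ε : ℝ}
    (hT : Tendsto T atTop (𝓝 T0)) (hε : 0 < ε) (hT0 : ∀ v, ε * ‖v‖ ^ 2 ≤ ⟪T0 v, v⟫_ℝ)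
    (hTsym : ∀ n u v, ⟪T n u, v⟫_ℝ = ⟪u, T n v⟫_ℝ)
    (hHsym : ∀ x u v, ⟪H x u, v⟫_ℝ = ⟪u, H x v⟫_ℝ)
    (hC2 : ContDiff ℝ 2 Ψ) (hconv : ConvexOn ℝ Set.univ Ψ)
    (hgΨ : ∀ x, HasGradientAt Ψ (gΨ x) x) (hH : ∀ x, HasFDerivAt gΨ (H x) x)
    {Fn : ℕ → E → ℝ} (hFn : ∀ n x, Fn n x = 1 / 2 * ⟪T n x, x⟫_ℝ - ⟪r n, x⟫_ℝ + Ψ x)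
    {g : ℕ → E} (hg : ∀ n, g n = T n (h n) - r n + gΨ (h n))
    (hbd : ∃ C, ∀ᶠ n in atTop, ‖h n‖ ≤ C) (hg0 : Tendsto g atTop (𝓝 0)) :
    ∀ᶠ n in atTop, ∀ w, (T n + H (h n)) w = g n →
      ∀ x, Fn n (h n) - (1 + ε) / 2 * ⟪g n, w⟫_ℝ ≤ Fn n x := by
  obtain ⟨C, hC⟩ := hbd
  set η := ε * (ε / 2) / (1 + ε) with hη
  have hηpos : 0 < η := by positivity
  obtain ⟨δ, hδ, hu⟩ := aux_hess_unif hC2 hgΨ hH (C + 1) η hηpos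
  set d := min δ 1 with hd
  have hdpos : 0 < d := lt_min hδ one_pos
  have hgn : ∀ᶠ n in atTop, ‖g n‖ ≤ ε / 4 * d := by
    have := tendsto_zero_iff_norm_tendsto_zero.1 hg0
    exact this.eventually (eventually_le_nhds (by positivity))
  filter_upwards [hC, hgn, aux_ev_T hT (half_pos hε)] with n hCn hgn hTn w hw x
  have hTp : ∀ v, ε / 2 * ‖v‖ ^ 2 ≤ ⟪T n v, v⟫_ℝ := by
    intro v
    have := abs_le.1 (hTn v)
    linarith [hT0 v]
  have hHp := aux_hess_nonneg hgΨ hH hconv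
  obtain ⟨v, rfl⟩ : ∃ v, x = h n + v := ⟨x - h n, by abel⟩
  set y := h n
  have hexp : Fn n (y + v) = Fn n y + ⟪g n, v⟫_ℝ + 1 / 2 * ⟪T n v, v⟫_ℝ +
      (Ψ (y + v) - Ψ y - ⟪gΨ y, v⟫_ℝ) := by
    have e1 : ⟪T n v, y⟫_ℝ = ⟪T n y, v⟫_ℝ := by rw [hTsym, real_inner_comm]
    rw [hFn, hFn, hg]
    change _ = _ + ⟪T n y - r n + gΨ y, v⟫_ℝ + _ + _
    simp only [map_add, inner_add_left, inner_add_right, inner_sub_left, e1]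
    ring
  -- positivity of the quadratic form
  have hq : ∀ z, 0 ≤ ⟪(T n + H y) z, z⟫_ℝ := by
    intro z
    have h1 := hTp z
    have h2 := hHp y z
    have h3 : 0 ≤ ε / 2 * ‖z‖ ^ 2 := by positivity
    simp only [_root_.add_apply, inner_add_left]
    linarith
  have hgw : 0 ≤ ⟪g n, w⟫_ℝ := by rw [← hw]; exact hq w
  by_cases hv : ‖v‖ ≤ d
  · -- near
    have h1 : Ψ y + ⟪gΨ y, v⟫_ℝ + (⟪H y v, v⟫_ℝ - η * ‖v‖ ^ 2) / 2 ≤ Ψ (y + v) := by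
      apply aux_taylorE hgΨ hH
      intro t ht
      have htv : ‖t • v‖ ≤ ‖v‖ := by
        rw [norm_smul, Real.norm_of_nonneg ht.1]
        exact mul_le_of_le_one_left (norm_nonneg _) ht.2
      have := hu y (y + t • v) (by linarith)
        ((norm_add_le _ _).trans (by
          have : ‖t • v‖ ≤ 1 := htv.trans (hv.trans (min_le_right _ _))
          linarith))
        (by
          have : ‖t • v‖ ≤ δ := htv.trans (hv.trans (min_le_left _ _))
          simpa using this) v
      linarith
    have h2 : (1 + ε)⁻¹ * ⟪(T n + H y) v, v⟫_ℝ ≤ ⟪(T n + H y) v, v⟫_ℝ - η * ‖v‖ ^ 2 := by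
      have h3 : ε / 2 * ‖v‖ ^ 2 ≤ ⟪(T n + H y) v, v⟫_ℝ := by
        have h1 := hTp v
        have h2 := hHp y v
        simp only [_root_.add_apply, inner_add_left]
        linarith
      have h4 : η * ‖v‖ ^ 2 = ε / (1 + ε) * (ε / 2 * ‖v‖ ^ 2) := by rw [hη]; ring
      have h5 : (1 + ε)⁻¹ = 1 - ε / (1 + ε) := by field_simp; ring
      rw [h4, h5]
      have : ε / (1 + ε) * (ε / 2 * ‖v‖ ^ 2) ≤ ε / (1 + ε) * ⟪(T n + H y) v, v⟫_ℝ := by gcongr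
      linarith
    have h3 := hq (v + (1 + ε) • w)
    have e2 : ⟪(T n + H y) (v + (1 + ε) • w), v + (1 + ε) • w⟫_ℝ =
        ⟪(T n + H y) v, v⟫_ℝ + 2 * (1 + ε) * ⟪g n, v⟫_ℝ + (1 + ε) ^ 2 * ⟪g n, w⟫_ℝ := by
      have e3 : ⟪(T n + H y) v, w⟫_ℝ = ⟪g n, v⟫_ℝ := by
        rw [← hw, _root_.add_apply, _root_.add_apply, inner_add_left,
          inner_add_left, hTsym, hHsym, real_inner_comm, real_inner_comm (H y w)]
      rw [map_add, map_smul, hw]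
      simp only [inner_add_left, inner_add_right, inner_smul_left, inner_smul_right, e3]
      simp
      ring
    rw [e2] at h3
    have h4 : 0 ≤ (1 + ε)⁻¹ * ⟪(T n + H y) v, v⟫_ℝ + 2 * ⟪g n, v⟫_ℝ + (1 + ε) * ⟪g n, w⟫_ℝ := by
      have := mul_nonneg (inv_nonneg.2 (by linarith : 0 ≤ 1 + ε)) h3
      have e4 : (1 + ε)⁻¹ * (⟪(T n + H y) v, v⟫_ℝ + 2 * (1 + ε) * ⟪g n, v⟫_ℝ +
        (1 + ε) ^ 2 * ⟪g n, w⟫_ℝ) = (1 + ε)⁻¹ * ⟪(T n + H y) v, v⟫_ℝ + 2 * ⟪g n, v⟫_ℝ +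
        (1 + ε) * ⟪g n, w⟫_ℝ := by field_simp
      rwa [e4] at this
    rw [hexp]
    have e5 : ⟪(T n + H y) v, v⟫_ℝ = ⟪T n v, v⟫_ℝ + ⟪H y v, v⟫_ℝ := by
      rw [_root_.add_apply, inner_add_left]
    rw [e5] at h2 h4
    linarith
  · -- far
    push Not at hv
    have h1 : Ψ y + ⟪gΨ y, v⟫_ℝ + 0 / 2 ≤ Ψ (y + v) :=
      aux_taylorE hgΨ hH y v 0 (fun t _ => hHp _ v)
    have h2 : - (‖g n‖ * ‖v‖) ≤ ⟪g n, v⟫_ℝ := (abs_le.1 (abs_real_inner_le_norm _ _)).1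
    have h3 := hTp v
    have h4 : ‖g n‖ * ‖v‖ ≤ ε / 4 * d * ‖v‖ := by gcongr
    have h5 : ε / 4 * d * ‖v‖ ≤ ε / 4 * ‖v‖ * ‖v‖ := by gcongr
    have h6 : 0 ≤ (1 + ε) / 2 * ⟪g n, w⟫_ℝ := by positivity
    rw [hexp]
    nlinarith

end Abstract

section Bridge

open scoped InnerProductSpace

theorem pinv_sym {m : ℕ} {G : Matrix (Fin m) (Fin m) ℝ} (hG : Gᵀ = G) :
    (pinv G)ᵀ * G * pinv G = pinv G := by
  unfold pinv
  split_ifs with hex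
  · obtain ⟨h1, h2, h3, h4⟩ := hex.choose_spec
    set P := hex.choose
    rw [transpose_mul, hG] at h3 h4
    have hGP : G * P = (G * P) * (P * G) := by
      calc G * P = Pᵀ * G := h3.symm
        _ = Pᵀ * (G * P * G) := by rw [h1]
        _ = (Pᵀ * G) * (P * G) := by simp only [Matrix.mul_assoc]
        _ = _ := by rw [h3]
    have hPG : P * G = (G * P) * (P * G) := by
      calc P * G = G * Pᵀ := h4.symm
        _ = (G * P * G) * Pᵀ := by rw [h1]
        _ = (G * P) * (G * Pᵀ) := by simp only [Matrix.mul_assoc]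
        _ = _ := by rw [h4]
    rw [h3, hGP, ← hPG, h2]
  · simp

theorem pinv_quad {N m : ℕ} (A : Matrix (Fin N) (Fin N) ℝ) (hA : Aᵀ = A)
    (D : Matrix (Fin N) (Fin m) ℝ) (g : Fin N → ℝ) :
    ∃ w : Fin m → ℝ, g ⬝ᵥ D *ᵥ w = g ⬝ᵥ (D * pinv (Dᵀ * A * D) * Dᵀ) *ᵥ g ∧
      (D *ᵥ w) ⬝ᵥ A *ᵥ (D *ᵥ w) = g ⬝ᵥ (D * pinv (Dᵀ * A * D) * Dᵀ) *ᵥ g := by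
  have hG : (Dᵀ * A * D)ᵀ = Dᵀ * A * D := by
    simp [transpose_mul, hA, Matrix.mul_assoc]
  have hp := pinv_sym hG
  set P := pinv (Dᵀ * A * D)
  refine ⟨P *ᵥ (Dᵀ *ᵥ g), by simp [Matrix.mulVec_mulVec, Matrix.mul_assoc], ?_⟩
  have : D * P * Dᵀ = (D * P * Dᵀ)ᵀ * A * (D * P * Dᵀ) := by
    conv_lhs => rw [← hp]
    simp [transpose_mul, Matrix.mul_assoc]
  rw [this]
  simp only [Matrix.mulVec_mulVec, Matrix.mul_assoc, Matrix.dotProduct_mulVec,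
    Matrix.vecMul_mulVec, Matrix.transpose_mul, Matrix.transpose_transpose]

/-- Matrix as continuous operator. -/
noncomputable def op {N : ℕ} (M : Matrix (Fin N) (Fin N) ℝ) :
    EuclideanSpace ℝ (Fin N) →L[ℝ] EuclideanSpace ℝ (Fin N) :=
  LinearMap.toContinuousLinearMap (Matrix.toEuclideanLin M)

/-- Linear version. -/
noncomputable def opL (N : ℕ) : Matrix (Fin N) (Fin N) ℝ →ₗ[ℝ]
    (EuclideanSpace ℝ (Fin N) →L[ℝ] EuclideanSpace ℝ (Fin N)) :=
  (LinearMap.toContinuousLinearMap (𝕜 := ℝ) (E := EuclideanSpace ℝ (Fin N))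
    (F' := EuclideanSpace ℝ (Fin N))).toLinearMap ∘ₗ (Matrix.toEuclideanLin).toLinearMap

theorem opL_apply {N : ℕ} (M : Matrix (Fin N) (Fin N) ℝ) : opL N M = op M := rfl

theorem ofEuc_op {N : ℕ} (M : Matrix (Fin N) (Fin N) ℝ) (v : EuclideanSpace ℝ (Fin N)) :
    ofEuc (op M v) = M *ᵥ ofEuc v := rfl

theorem dot_eq {N : ℕ} (a b : EuclideanSpace ℝ (Fin N)) : ofEuc a ⬝ᵥ ofEuc b = ⟪a, b⟫_ℝ := by
  rw [EuclideanSpace.inner_eq_star_dotProduct, dotProduct_comm]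
  rfl

theorem qf_eq {N : ℕ} (M : Matrix (Fin N) (Fin N) ℝ) (v : EuclideanSpace ℝ (Fin N)) :
    qf M v = ⟪op M v, v⟫_ℝ := by
  rw [qf, ← ofEuc_op, dot_eq, real_inner_comm]

theorem op_add {N : ℕ} (M M' : Matrix (Fin N) (Fin N) ℝ) : op (M + M') = op M + op M' :=
  map_add (opL N) M M'

theorem op_sub {N : ℕ} (M M' : Matrix (Fin N) (Fin N) ℝ) : op (M - M') = op M - op M' :=
  map_sub (opL N) M M'

theorem op_smul_one {N : ℕ} (c : ℝ) (v : EuclideanSpace ℝ (Fin N)) :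
    op (c • (1 : Matrix (Fin N) (Fin N) ℝ)) v = c • v := by
  rw [← opL_apply, map_smul]
  simp [opL]

theorem op_sym {N : ℕ} {M : Matrix (Fin N) (Fin N) ℝ} (hM : Mᵀ = M)
    (u v : EuclideanSpace ℝ (Fin N)) : ⟪op M u, v⟫_ℝ = ⟪u, op M v⟫_ℝ := by
  rw [← dot_eq, ← dot_eq, ofEuc_op, ofEuc_op, Matrix.dotProduct_mulVec, ← Matrix.mulVec_transpose,
    hM]

theorem op_nonneg {N : ℕ} {M : Matrix (Fin N) (Fin N) ℝ} (hM : M.PosSemidef)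
    (v : EuclideanSpace ℝ (Fin N)) : 0 ≤ ⟪op M v, v⟫_ℝ := by
  have := hM.dotProduct_mulVec_nonneg (ofEuc v)
  rw [← qf_eq, qf]
  simpa using this

theorem psd_transpose {N : ℕ} {M : Matrix (Fin N) (Fin N) ℝ} (hM : M.PosSemidef) : Mᵀ = M := by
  have := hM.isHermitian.eq
  rwa [Matrix.conjTranspose_eq_transpose_of_trivial] at this

theorem psd_of_op {N : ℕ} {M : Matrix (Fin N) (Fin N) ℝ} (hM : Mᵀ = M)
    (h : ∀ v, 0 ≤ ⟪op M v, v⟫_ℝ) : M.PosSemidef := by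
  apply Matrix.PosSemidef.of_dotProduct_mulVec_nonneg
  · rw [Matrix.IsHermitian, Matrix.conjTranspose_eq_transpose_of_trivial, hM]
  · intro x
    have := h (toEuc x)
    rw [← qf_eq, qf] at this
    rw [star_trivial]
    exact this

theorem op_tendsto {N : ℕ} {Rn : ℕ → Matrix (Fin N) (Fin N) ℝ} {R : Matrix (Fin N) (Fin N) ℝ}
    (hR : ∀ i j, Tendsto (fun n => Rn n i j) atTop (𝓝 (R i j))) :
    Tendsto (fun n => op (Rn n)) atTop (𝓝 (op R)) := by
  have h1 : Tendsto Rn atTop (𝓝 R) :=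
    tendsto_pi_nhds.2 fun i => tendsto_pi_nhds.2 fun j => hR i j
  have hc : Continuous (opL N) := LinearMap.continuous_of_finiteDimensional _
  exact (hc.tendsto R).comp h1

theorem op_summable {N : ℕ} {Rn : ℕ → Matrix (Fin N) (Fin N) ℝ}
    (hR : ∀ i j, Summable (fun n => |Rn n i j - Rn (n+1) i j|)) :
    Summable (fun n => ‖op (Rn n) - op (Rn (n+1))‖) := by
  have hb : ∀ M : Matrix (Fin N) (Fin N) ℝ,
      ‖op M‖ ≤ ∑ i, ∑ j, |M i j| * ‖op (Matrix.single i j (1:ℝ))‖ := by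
    intro M
    conv_lhs => rw [← opL_apply, Matrix.matrix_eq_sum_single M]
    simp only [map_sum]
    refine (norm_sum_le _ _).trans (Finset.sum_le_sum fun i _ => ?_)
    refine (norm_sum_le _ _).trans (Finset.sum_le_sum fun j _ => ?_)
    have : Matrix.single i j (M i j) = M i j • Matrix.single i j (1:ℝ) := by
      simp [Matrix.smul_single]
    rw [this, map_smul, norm_smul, opL_apply, Real.norm_eq_abs]
  have hs : Summable (fun n => ∑ i, ∑ j, |(Rn n - Rn (n+1)) i j| *
      ‖op (Matrix.single i j (1:ℝ))‖) := by
    refine summable_sum fun i _ => summable_sum fun j _ => ?_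
    exact (hR i j).mul_right _
  refine Summable.of_nonneg_of_le (fun n => norm_nonneg _) (fun n => ?_) hs
  rw [← op_sub]
  exact hb _

theorem grad_quad {N : ℕ} {M : Matrix (Fin N) (Fin N) ℝ} (hM : Mᵀ = M)
    {r : EuclideanSpace ℝ (Fin N)} {Ψ : EuclideanSpace ℝ (Fin N) → ℝ}
    {g x : EuclideanSpace ℝ (Fin N)} (hg : HasGradientAt Ψ g x) :
    HasGradientAt (fun x => 1 / 2 * ⟪op M x, x⟫_ℝ - ⟪r, x⟫_ℝ + Ψ x) (op M x - r + g) x := by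
  rw [hasGradientAt_iff_hasFDerivAt] at hg ⊢
  have h1 := (((op M).hasFDerivAt (x := x)).inner ℝ (hasFDerivAt_id x)).const_mul (1 / 2 : ℝ)
  have h2 := (hasFDerivAt_const r x).inner ℝ (hasFDerivAt_id x)
  refine ((h1.sub h2).add hg).congr_fderiv ?_
  ext v
  have := op_sym hM v x
  simp [inner_add_left, inner_sub_left, this, real_inner_comm v]
  ring

end Bridge

theorem mm_convergence_rate_theta
    {N : ℕ} (hN : 0 < N)
    (R : Matrix (Fin N) (Fin N) ℝ) (hRpd : R.PosDef)
    (r : EuclideanSpace ℝ (Fin N))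
    (Ψ : EuclideanSpace ℝ (Fin N) → ℝ)
    (hΨbdd : BddBelow (Set.range Ψ))
    (hΨconv : ConvexOn ℝ Set.univ Ψ)
    (hΨC2 : ContDiff ℝ 2 Ψ)
    (gradΨ : EuclideanSpace ℝ (Fin N) → EuclideanSpace ℝ (Fin N))
    (hgradΨ : ∀ x, HasGradientAt Ψ (gradΨ x) x)
    (hessΨ : EuclideanSpace ℝ (Fin N) → Matrix (Fin N) (Fin N) ℝ)
    (hhessΨ : ∀ x, HasFDerivAt gradΨ
      (LinearMap.toContinuousLinearMap (Matrix.toEuclideanLin (hessΨ x))) x)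
    (F : EuclideanSpace ℝ (Fin N) → ℝ)
    (hF : ∀ x, F x = (1/2) * qf R x - ofEuc r ⬝ᵥ ofEuc x + Ψ x)
    (Rn : ℕ → Matrix (Fin N) (Fin N) ℝ) (hRnpsd : ∀ n, (Rn n).PosSemidef)
    (rn : ℕ → EuclideanSpace ℝ (Fin N))
    (Fn : ℕ → EuclideanSpace ℝ (Fin N) → ℝ)
    (hFn : ∀ n x, Fn n x = (1/2) * qf (Rn n) x - ofEuc (rn n) ⬝ᵥ ofEuc x + Ψ x)
    (B : EuclideanSpace ℝ (Fin N) → Matrix (Fin N) (Fin N) ℝ)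
    (hBpsd : ∀ x, (B x).PosSemidef)
    (An : ℕ → EuclideanSpace ℝ (Fin N) → Matrix (Fin N) (Fin N) ℝ)
    (hAn : ∀ n x, An n x = Rn n + B x)
    (gradFn : ℕ → EuclideanSpace ℝ (Fin N) → EuclideanSpace ℝ (Fin N))
    (hgradFn : ∀ n x, HasGradientAt (Fn n) (gradFn n x) x)
    (Θ : ℕ → EuclideanSpace ℝ (Fin N) → EuclideanSpace ℝ (Fin N) → ℝ)
    (hΘ : ∀ n x y, Θ n x y =
      Fn n y + ofEuc (gradFn n y) ⬝ᵥ ofEuc (x - y) + (1/2) * qf (An n y) (x - y))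
    (M : ℕ → ℕ) (D : (n : ℕ) → Matrix (Fin N) (Fin (M n)) ℝ)
    (h : ℕ → EuclideanSpace ℝ (Fin N))
    (halg : ∀ n, h (n+1) ∈ rangeD (D n) ∧
      ∀ y ∈ rangeD (D n), Θ n (h (n+1)) (h n) ≤ Θ n y (h n))
    (hmaj : ∀ n x, Fn n x ≤ Θ n x (h n))
    (ha1r : Summable (fun n => ‖rn n - rn (n+1)‖))
    (ha1R : ∀ i j, Summable (fun n => |Rn n i j - Rn (n+1) i j|))
    (ha1rlim : Tendsto rn atTop (𝓝 r))
    (ha1Rlim : ∀ i j, Tendsto (fun n => Rn n i j) atTop (𝓝 (R i j)))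
    (ha2i : ∀ n, gradFn n (h n) ∈ rangeD (D n) ∧ h n ∈ rangeD (D n))
    (V : Matrix (Fin N) (Fin N) ℝ) (hVpd : V.PosDef)
    (ha2ii : ∀ x, (B x - hessΨ x).PosSemidef ∧ (V - B x).PosSemidef)
    (ha2iii : (∀ n, rn n = r ∧ Rn n = R) ∨
      (∃ c : ℝ, ∀ x, ‖mulE (B x) x - gradΨ x‖ ≤ c))
    (ε : ℝ) (hε : 0 < ε)
    (hεR : (R - ε • (1 : Matrix (Fin N) (Fin N) ℝ)).PosDef)
    :
    ∃ nε : ℕ, 1 ≤ nε ∧ ∀ n ≥ nε, gradFn n (h n) ≠ 0 →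
      ((Rn n + hessΨ (h n)) - (R - ε • (1 : Matrix (Fin N) (Fin N) ℝ))).PosSemidef ∧
      Fn n (h (n+1)) - (⨅ x, Fn n x) ≤
        (1 - (1 + ε)⁻¹ *
            ((ofEuc (gradFn n (h n)) ⬝ᵥ
                (D n * pinv ((D n)ᵀ * An n (h n) * D n) * (D n)ᵀ).mulVec
                  (ofEuc (gradFn n (h n)))) /
              (ofEuc (gradFn n (h n)) ⬝ᵥ
                (Rn n + hessΨ (h n))⁻¹.mulVec (ofEuc (gradFn n (h n)))))) *
          (Fn n (h n) - (⨅ x, Fn n x)) := by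
  obtain ⟨m, hm⟩ := hΨbdd
  have hm : ∀ x, m ≤ Ψ x := fun x => hm ⟨x, rfl⟩
  have hRnT : ∀ n, (Rn n)ᵀ = Rn n := fun n => psd_transpose (hRnpsd n)
  have hBT : ∀ x, (B x)ᵀ = B x := fun x => psd_transpose (hBpsd x)
  have hAT : ∀ n x, (An n x)ᵀ = An n x := fun n x => by
    rw [hAn, transpose_add, hRnT, hBT]
  have hHT : ∀ x, (hessΨ x)ᵀ = hessΨ x := fun x => by
    have := psd_transpose (ha2ii x).1
    rw [transpose_sub, hBT] at this
    exact sub_right_injective this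
  have hH : ∀ x, HasFDerivAt gradΨ (op (hessΨ x)) x := hhessΨ
  have hFn' : ∀ n x, Fn n x = 1 / 2 * inner ℝ (op (Rn n) x) x - inner ℝ (rn n) x + Ψ x := by
    intro n x
    rw [hFn, qf_eq, dot_eq]
  have hg' : ∀ n x, gradFn n x = op (Rn n) x - rn n + gradΨ x := by
    intro n x
    have h1 := grad_quad (r := rn n) (hRnT n) (hgradΨ x)
    have h2 : Fn n = fun x => 1 / 2 * inner ℝ (op (Rn n) x) x - inner ℝ (rn n) x + Ψ x :=
      funext (hFn' n)
    rw [← h2] at h1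
    exact (hgradFn n x).unique h1
  have hopA : ∀ n x, op (An n x) = op (Rn n) + op (B x) := fun n x => by rw [hAn, op_add]
  have hΘ' : ∀ n x y, Θ n x y = Fn n y + inner ℝ (gradFn n y) (x - y) +
      1 / 2 * inner ℝ ((op (Rn n) + op (B y)) (x - y)) (x - y) := by
    intro n x y
    rw [hΘ, dot_eq, qf_eq, hopA]
  have hT := op_tendsto ha1Rlim
  have hT0 : ∀ v, ε * ‖v‖ ^ 2 ≤ inner ℝ (op R v) v := by
    intro v
    have := op_nonneg hεR.posSemidef v
    rw [op_sub, _root_.sub_apply, op_smul_one, inner_sub_left, real_inner_smul_left,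
      real_inner_self_eq_norm_sq] at this
    linarith
  have hTsym : ∀ n u v, inner ℝ (op (Rn n) u) v = inner ℝ u (op (Rn n) v) :=
    fun n => op_sym (hRnT n)
  have hBsym : ∀ x u v, inner ℝ (op (B x) u) v = inner ℝ u (op (B x) v) :=
    fun x => op_sym (hBT x)
  have hHsym : ∀ x u v, inner ℝ (op (hessΨ x) u) v = inner ℝ u (op (hessΨ x) v) :=
    fun x => op_sym (hHT x)
  have hK : ∀ x v, inner ℝ (op (B x) v) v ≤ ‖op V‖ * ‖v‖ ^ 2 := by
    intro x v
    have h1 := op_nonneg (ha2ii x).2 v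
    rw [op_sub, _root_.sub_apply, inner_sub_left] at h1
    have h2 : inner ℝ (op V v) v ≤ ‖op V‖ * ‖v‖ * ‖v‖ := by
      refine (real_inner_le_norm _ _).trans ?_
      gcongr
      exact ContinuousLinearMap.le_opNorm _ _
    nlinarith
  have hB0 : ∀ x v, 0 ≤ inner ℝ (op (B x) v) v := fun x v => op_nonneg (hBpsd x) v
  have hdesc : ∀ n (t : ℝ), Fn n (h (n+1)) ≤ Fn n (h n) - t * ‖gradFn n (h n)‖ ^ 2 +
      t ^ 2 / 2 * inner ℝ ((op (Rn n) + op (B (h n))) (gradFn n (h n))) (gradFn n (h n)) := by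
    intro n t
    obtain ⟨⟨u, hu⟩, ⟨u', hu'⟩⟩ := ha2i n
    have h1 := (halg n).2 (h n - t • gradFn n (h n)) ⟨u' - t • u, by
      rw [Matrix.mulVec_sub, Matrix.mulVec_smul]
      conv_lhs => rw [hu, hu']
      rfl⟩
    refine ((hmaj n _).trans h1).trans (le_of_eq ?_)
    rw [hΘ', sub_sub_cancel_left]
    simp only [map_neg, map_smul, inner_neg_left, inner_neg_right, real_inner_smul_left,
      real_inner_smul_right, real_inner_self_eq_norm_sq]
    ring
  have hzero : ∀ n, inner ℝ (gradFn n (h n)) (h (n+1) - h n) +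
        1 / 2 * inner ℝ ((op (Rn n) + op (B (h n))) (h (n+1) - h n)) (h (n+1) - h n) ≤
      inner ℝ (gradFn n (h n)) (0 - h n) +
        1 / 2 * inner ℝ ((op (Rn n) + op (B (h n))) (0 - h n)) (0 - h n) := by
    intro n
    have h1 := (halg n).2 0 ⟨0, by rw [Matrix.mulVec_zero]; rfl⟩
    rw [hΘ', hΘ'] at h1
    linarith
  have hiii : (∀ n, rn n = r ∧ op (Rn n) = op R) ∨
      ∃ c : ℝ, ∀ x, ‖op (B x) x - gradΨ x‖ ≤ c := by
    rcases ha2iii with ha | hb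
    · exact Or.inl fun n => ⟨(ha n).1, by rw [(ha n).2]⟩
    · exact Or.inr hb
  obtain ⟨hbd, hg0⟩ := aux_gto0 hT ha1rlim (op_summable ha1R) ha1r hε hT0 hTsym hBsym hm hK hB0
    hFn' (fun n => hg' n (h n)) hdesc hzero hiii
  have hfin := aux_final hT hε hT0 hTsym hHsym hΨC2 hΨconv hgradΨ hH hFn'
    (fun n => hg' n (h n)) hbd hg0
  have hHp := aux_hess_nonneg hgradΨ hH hΨconv
  obtain ⟨k, hk⟩ := eventually_atTop.1 (hfin.and (aux_ev_T hT (half_pos hε)))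
  refine ⟨k + 1, by omega, fun n hn hgne => ?_⟩
  obtain ⟨hlow, hTn⟩ := hk n (by omega)
  have hpsd : ((Rn n + hessΨ (h n)) - (R - ε • (1 : Matrix (Fin N) (Fin N) ℝ))).PosSemidef := by
    apply psd_of_op
    · rw [transpose_sub, transpose_add, hRnT, hHT, psd_transpose hεR.posSemidef]
    · intro v
      have h1 := (abs_le.1 (hTn v)).1
      have h2 := hHp (h n) v
      have h3 : 0 ≤ ε / 2 * ‖v‖ ^ 2 := by positivity
      simp only [op_sub, op_add, _root_.sub_apply, _root_.add_apply, op_smul_one, inner_sub_left,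
        inner_add_left, real_inner_smul_left, real_inner_self_eq_norm_sq]
      linarith
  refine ⟨hpsd, ?_⟩
  set g := gradFn n (h n) with hgdef
  set K := Rn n + hessΨ (h n) with hKdef
  have hKpd : K.PosDef := by
    have := hεR.add_posSemidef hpsd
    rwa [add_sub_cancel] at this
  have hKdet : IsUnit K.det := (Matrix.isUnit_iff_isUnit_det K).1 hKpd.isUnit
  -- the Newton direction
  have hw : (op (Rn n) + op (hessΨ (h n))) (op K⁻¹ g) = g := by
    rw [← op_add]
    have : ofEuc (op K (op K⁻¹ g)) = ofEuc g := by
      rw [ofEuc_op, ofEuc_op, Matrix.mulVec_mulVec, Matrix.mul_nonsing_inv _ hKdet,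
        Matrix.one_mulVec]
    exact (WithLp.equiv 2 (Fin N → ℝ)).injective this
  have hlow' := hlow _ hw
  have hq : ofEuc g ⬝ᵥ K⁻¹ *ᵥ ofEuc g = inner ℝ g (op K⁻¹ g) := by
    rw [← ofEuc_op, dot_eq]
  have hqpos : 0 < ofEuc g ⬝ᵥ K⁻¹ *ᵥ ofEuc g := by
    have := hKpd.inv.dotProduct_mulVec_pos (x := ofEuc g) (fun h0 => hgne
      ((WithLp.equiv 2 (Fin N → ℝ)).injective h0))
    simpa using this
  rw [← hq] at hlow'
  set q := ofEuc g ⬝ᵥ K⁻¹ *ᵥ ofEuc g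
  have hinf : Fn n (h n) - (1 + ε) / 2 * q ≤ ⨅ x, Fn n x := le_ciInf hlow'
  obtain ⟨w, hw1, hw2⟩ := pinv_quad (An n (h n)) (hAT n (h n)) (D n) (ofEuc g)
  set c := ofEuc g ⬝ᵥ (D n * pinv ((D n)ᵀ * An n (h n) * D n) * (D n)ᵀ) *ᵥ ofEuc g
  have hc0 : 0 ≤ c := by
    rw [← hw2]
    have hApsd : (An n (h n)).PosSemidef := by
      rw [hAn]; exact (hRnpsd n).add (hBpsd _)
    have := hApsd.dotProduct_mulVec_nonneg (D n *ᵥ w)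
    simpa using this
  have hdec : Fn n (h (n+1)) ≤ Fn n (h n) - c / 2 := by
    obtain ⟨_, ⟨u', hu'⟩⟩ := ha2i n
    have h1 := (halg n).2 (h n - toEuc (D n *ᵥ w)) ⟨u' - w, by
      rw [Matrix.mulVec_sub]
      conv_lhs => rw [hu']
      rfl⟩
    refine ((hmaj n _).trans h1).trans (le_of_eq ?_)
    rw [hΘ, sub_sub_cancel_left, qf]
    have e : ofEuc (-toEuc (D n *ᵥ w)) = -(D n *ᵥ w) := rfl
    rw [e, Matrix.mulVec_neg, neg_dotProduct_neg, dotProduct_neg, hw2, hw1]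
    ring
  have hmul : (1 + ε)⁻¹ * (c / q) * (Fn n (h n) - ⨅ x, Fn n x) ≤ c / 2 := by
    have h1 : (1 + ε)⁻¹ * (c / q) * (Fn n (h n) - ⨅ x, Fn n x) ≤
        (1 + ε)⁻¹ * (c / q) * ((1 + ε) / 2 * q) := by
      apply mul_le_mul_of_nonneg_left (by linarith)
      positivity
    have h2 : (1 + ε)⁻¹ * (c / q) * ((1 + ε) / 2 * q) = c / 2 := by
      field_simp
    linarith
  linarith
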